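/- Let U ⊆ ℝ² be a connected open set, Γ a torsion-free affine connection on U with projective Schouten tensor P, Λ ≠ 0 real, and let g be the metric on U×ℝ² with components g(∂_{ξ_i},∂_{x^j}) = ½δ_{ij}, g(∂_{x^i},∂_{x^j}) = −Σ_k Γ^k_{ij}ξ_k + Λξ_iξ_j + Λ^{-1}P_{(ij)}, g(∂_{ξ_i},∂_{ξ_j}) = 0. If 𝒦 is any smooth vector field on U×ℝ² with ℒ_𝒦 g = 0 (a Killing field), then there exist a smooth vector field K = (K¹,K²) on U and a smooth one-form ρ on U such that (ℒ_K Γ)^k_{ij} = δ^k_i ρ_j + δ^k_j ρ_i on U (K is projective) and 𝒦 = Σ_i K^i ∂_{x^i} + Σ_i (−Σ_j ξ_j ∂_i K^j + Λ^{-1} ρ_i) ∂_{ξ_i}; in particular the x-components of 𝒦 are independent of (ξ₁,ξ₂) and every Killing field of g is the lift of a projective vector field. -/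

import Mathlib

noncomputable section
open Matrix

/-- Points of the plane. -/
abbrev Pt2 : Type := Fin 2 → ℝ
/-- Points of the 4-manifold `U × ℝ²`, coordinates `(x¹, x², ξ₁, ξ₂)`. -/
abbrev Pt4 : Type := Fin 4 → ℝ

/-- Partial derivative of a function on the plane. -/
def pd2 (i : Fin 2) (f : Pt2 → ℝ) (x : Pt2) : ℝ := fderiv ℝ f x (Pi.single i 1)
/-- Partial derivative of a function on `ℝ⁴`. -/
def pd4 (a : Fin 4) (f : Pt4 → ℝ) (p : Pt4) : ℝ := fderiv ℝ f p (Pi.single a 1)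

/-- Base point `(x¹,x²)` of a point of `U × ℝ²`. -/
def bpt (p : Pt4) : Pt2 := ![p 0, p 1]
/-- Fibre coordinates `(ξ₁,ξ₂)` of a point of `U × ℝ²`. -/
def fib (p : Pt4) : Fin 2 → ℝ := ![p 2, p 3]

/-- An affine connection: `conn k i j` is the Christoffel symbol `Γ^k_{ij}`. -/
abbrev Conn : Type := Fin 2 → Fin 2 → Fin 2 → Pt2 → ℝ

/-- Curvature `R_{ij}{}^k{}_l` of a connection. -/
def curv (Γ : Conn) (i j k l : Fin 2) (x : Pt2) : ℝ :=
  pd2 i (Γ k j l) x - pd2 j (Γ k i l) x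
    + ∑ m, (Γ k i m x * Γ m j l x - Γ k j m x * Γ m i l x)

/-- Ricci tensor `R_{jl} = R_{kj}{}^k{}_l`. -/
def ricciT (Γ : Conn) (j l : Fin 2) (x : Pt2) : ℝ := ∑ k, curv Γ k j k l x

/-- Projective Schouten tensor `P_{ij} = R_{(ij)} + (1/3) R_{[ij]}`. -/
def schouten (Γ : Conn) (i j : Fin 2) (x : Pt2) : ℝ :=
  (ricciT Γ i j x + ricciT Γ j i x) / 2 + (ricciT Γ i j x - ricciT Γ j i x) / 6

/-- The Einstein lift metric with parameter `Λ`: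
`g(∂_{ξ_i},∂_{x^j}) = ½δ_{ij}`, `g(∂_{x^i},∂_{x^j}) = −Σ_k Γ^k_{ij}ξ_k + Λξ_iξ_j + Λ⁻¹P_{(ij)}`,
`g(∂_{ξ_i},∂_{ξ_j}) = 0`. -/
def einsteinLift (Γ : Conn) (Λ : ℝ) (p : Pt4) : Matrix (Fin 4) (Fin 4) ℝ :=
  let A : Fin 2 → Fin 2 → ℝ := fun i j =>
    -(∑ k, Γ k i j (bpt p) * fib p k) + Λ * fib p i * fib p j
      + Λ⁻¹ * ((schouten Γ i j (bpt p) + schouten Γ j i (bpt p)) / 2)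
  !![A 0 0, A 0 1, 1/2, 0;
     A 1 0, A 1 1, 0, 1/2;
     1/2, 0, 0, 0;
     0, 1/2, 0, 0]

/-- Lie derivative `(ℒ_X T)_{ab} = Σ_c (X^c ∂_c T_{ab} + T_{cb} ∂_a X^c + T_{ac} ∂_b X^c)`
of a covariant 2-tensor on an open subset of `ℝ⁴`. -/
def lieT (X : Fin 4 → Pt4 → ℝ) (T : Pt4 → Matrix (Fin 4) (Fin 4) ℝ)
    (a b : Fin 4) (p : Pt4) : ℝ :=
  ∑ c, (X c p * pd4 c (fun q => T q a b) p
    + T p c b * pd4 a (X c) p + T p a c * pd4 b (X c) p)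

/-- Lie derivative of a connection along a vector field `K` on the plane. -/
def lieConn (Γ : Conn) (K : Fin 2 → Pt2 → ℝ) (k i j : Fin 2) (x : Pt2) : ℝ :=
  pd2 i (fun y => pd2 j (K k) y) x
    + ∑ m, (K m x * pd2 m (Γ k i j) x - Γ m i j x * pd2 m (K k) x
        + Γ k i m x * pd2 j (K m) x + Γ k j m x * pd2 i (K m) x)

/-- The zero section. -/
def emb2 (x : Pt2) : Pt4 := ![x 0, x 1, 0, 0]

/-- The domain `U × ℝ²`. -/
def dom4 (U : Set Pt2) : Set Pt4 := {p : Pt4 | bpt p ∈ U}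

/-- `bpt` as a continuous linear map. -/
def bptL : Pt4 →L[ℝ] Pt2 :=
  ContinuousLinearMap.pi fun i => ContinuousLinearMap.proj (Fin.castLE (by norm_num) i)

lemma bptL_apply (p : Pt4) : bptL p = bpt p := by
  ext i; fin_cases i <;> rfl

lemma bpt_eq : bpt = bptL := by
  funext p; exact (bptL_apply p).symm

lemma bpt_contDiff : ContDiff ℝ (⊤ : ℕ∞) bpt := by
  rw [bpt_eq]; exact bptL.contDiff

lemma emb2_contDiff : ContDiff ℝ (⊤ : ℕ∞) emb2 := by
  rw [contDiff_pi]
  intro i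
  fin_cases i <;> simp [emb2] <;> fun_prop

lemma bpt_emb2 (x : Pt2) : bpt (emb2 x) = x := by
  ext i; fin_cases i <;> rfl

lemma dom4_open {U : Set Pt2} (h : IsOpen U) : IsOpen (dom4 U) :=
  h.preimage bpt_contDiff.continuous

lemma pd4_congr {V : Set Pt4} (hV : IsOpen V) {f g : Pt4 → ℝ} (h : ∀ p ∈ V, f p = g p)
    (a : Fin 4) {p : Pt4} (hp : p ∈ V) : pd4 a f p = pd4 a g p := by
  unfold pd4
  rw [Filter.EventuallyEq.fderiv_eq]
  filter_upwards [hV.mem_nhds hp] with q hq using h q hq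

lemma pd2_congr {V : Set Pt2} (hV : IsOpen V) {f g : Pt2 → ℝ} (h : ∀ p ∈ V, f p = g p)
    (a : Fin 2) {p : Pt2} (hp : p ∈ V) : pd2 a f p = pd2 a g p := by
  unfold pd2
  rw [Filter.EventuallyEq.fderiv_eq]
  filter_upwards [hV.mem_nhds hp] with q hq using h q hq

lemma pd4_contDiffOn {V : Set Pt4} (hV : IsOpen V) {f : Pt4 → ℝ}
    (hf : ContDiffOn ℝ (⊤ : ℕ∞) f V) (a : Fin 4) : ContDiffOn ℝ (⊤ : ℕ∞) (pd4 a f) V := by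
  have := hf.fderiv_of_isOpen (m := (⊤ : ℕ∞)) hV (by simp)
  exact this.clm_apply contDiffOn_const

lemma pd2_contDiffOn {V : Set Pt2} (hV : IsOpen V) {f : Pt2 → ℝ}
    (hf : ContDiffOn ℝ (⊤ : ℕ∞) f V) (a : Fin 2) : ContDiffOn ℝ (⊤ : ℕ∞) (pd2 a f) V := by
  have := hf.fderiv_of_isOpen (m := (⊤ : ℕ∞)) hV (by simp)
  exact this.clm_apply contDiffOn_const

lemma diffAt {E : Type*} [NormedAddCommGroup E] [NormedSpace ℝ E] {V : Set E} (hV : IsOpen V)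
    {f : E → ℝ} (hf : ContDiffOn ℝ (⊤ : ℕ∞) f V) {p : E} (hp : p ∈ V) :
    DifferentiableAt ℝ f p :=
  ((hf.contDiffAt (hV.mem_nhds hp)).differentiableAt (by simp))

lemma fderiv_comm_aux {E : Type*} [NormedAddCommGroup E] [NormedSpace ℝ E] {V : Set E}
    (hV : IsOpen V) {f : E → ℝ} (hf : ContDiffOn ℝ (⊤ : ℕ∞) f V) {p : E} (hp : p ∈ V) (v w : E) :
    fderiv ℝ (fun q => fderiv ℝ f q v) p w = fderiv ℝ (fun q => fderiv ℝ f q w) p v := by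
  have hc := hf.contDiffAt (hV.mem_nhds hp)
  have hs : IsSymmSndFDerivAt ℝ f p := hc.isSymmSndFDerivAt (by
    rw [minSmoothness_of_isRCLikeNormedField]; exact WithTop.coe_le_coe.2 le_top)
  have hd : DifferentiableAt ℝ (fderiv ℝ f) p :=
    ((hf.fderiv_of_isOpen (m := (⊤ : ℕ∞)) hV (by simp)).contDiffAt
      (hV.mem_nhds hp)).differentiableAt (by simp)
  rw [fderiv_clm_apply hd (by fun_prop), fderiv_clm_apply hd (by fun_prop)]
  simp
  exact hs w v

lemma pd4_comm {V : Set Pt4} (hV : IsOpen V) {f : Pt4 → ℝ}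
    (hf : ContDiffOn ℝ (⊤ : ℕ∞) f V) (a b : Fin 4) {p : Pt4} (hp : p ∈ V) :
    pd4 a (pd4 b f) p = pd4 b (pd4 a f) p :=
  fderiv_comm_aux hV hf hp _ _

lemma pd2_comm {V : Set Pt2} (hV : IsOpen V) {f : Pt2 → ℝ}
    (hf : ContDiffOn ℝ (⊤ : ℕ∞) f V) (a b : Fin 2) {p : Pt2} (hp : p ∈ V) :
    pd2 a (pd2 b f) p = pd2 b (pd2 a f) p :=
  fderiv_comm_aux hV hf hp _ _

lemma pd4_zero (a : Fin 4) (p : Pt4) : pd4 a (fun _ => 0) p = 0 := by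
  simp [pd4]

lemma pd4_neg (a : Fin 4) (f : Pt4 → ℝ) (p : Pt4) : pd4 a (fun q => -f q) p = -pd4 a f p := by
  simp [pd4, fderiv_fun_neg]

lemma pd4_add {f g : Pt4 → ℝ} {p : Pt4} (hf : DifferentiableAt ℝ f p)
    (hg : DifferentiableAt ℝ g p) (a : Fin 4) :
    pd4 a (fun q => f q + g q) p = pd4 a f p + pd4 a g p := by
  simp [pd4, fderiv_fun_add hf hg]

lemma pd4_mul {f g : Pt4 → ℝ} {p : Pt4} (hf : DifferentiableAt ℝ f p)
    (hg : DifferentiableAt ℝ g p) (a : Fin 4) :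
    pd4 a (fun q => f q * g q) p = f p * pd4 a g p + g p * pd4 a f p := by
  simp [pd4, fderiv_fun_mul hf hg]

lemma pd4_const_mul {f : Pt4 → ℝ} {p : Pt4} (hf : DifferentiableAt ℝ f p) (c : ℝ)
    (a : Fin 4) :
    pd4 a (fun q => c * f q) p = c * pd4 a f p := by
  simp [pd4, fderiv_const_mul hf]

lemma pd4_coord (a u : Fin 4) (p : Pt4) :
    pd4 a (fun q => q u) p = (Pi.single a 1 : Pt4) u := by
  have : HasFDerivAt (fun q : Pt4 => q u) (ContinuousLinearMap.proj u : Pt4 →L[ℝ] ℝ) p :=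
    (ContinuousLinearMap.proj u : Pt4 →L[ℝ] ℝ).hasFDerivAt
  simp only [pd4, this.fderiv]
  rfl

lemma pd4_comp {G : Pt2 → ℝ} {p : Pt4} (hG : DifferentiableAt ℝ G (bpt p)) (a : Fin 4) :
    pd4 a (fun q => G (bpt q)) p = fderiv ℝ G (bpt p) (bpt (Pi.single a 1)) := by
  have h1 : HasFDerivAt bpt bptL p := by rw [bpt_eq]; exact bptL.hasFDerivAt
  have h2 := hG.hasFDerivAt.comp p h1
  have h3 : (fun q => G (bpt q)) = G ∘ bpt := rfl
  simp only [pd4, h3, h2.fderiv]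
  simp [bptL_apply]

lemma bpt_single0 : bpt (Pi.single 0 1) = Pi.single 0 1 := by
  ext i; fin_cases i <;> simp [bpt]
lemma bpt_single1 : bpt (Pi.single 1 1) = Pi.single 1 1 := by
  ext i; fin_cases i <;> simp [bpt]
lemma bpt_single2 : bpt (Pi.single 2 1) = 0 := by
  ext i; fin_cases i <;> simp [bpt]
lemma bpt_single3 : bpt (Pi.single 3 1) = 0 := by
  ext i; fin_cases i <;> simp [bpt]

lemma pd4_comp0 {G : Pt2 → ℝ} {p : Pt4} (hG : DifferentiableAt ℝ G (bpt p)) :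
    pd4 0 (fun q => G (bpt q)) p = pd2 0 G (bpt p) := by
  rw [pd4_comp hG, bpt_single0]; rfl
lemma pd4_comp1 {G : Pt2 → ℝ} {p : Pt4} (hG : DifferentiableAt ℝ G (bpt p)) :
    pd4 1 (fun q => G (bpt q)) p = pd2 1 G (bpt p) := by
  rw [pd4_comp hG, bpt_single1]; rfl
lemma pd4_comp2 {G : Pt2 → ℝ} {p : Pt4} (hG : DifferentiableAt ℝ G (bpt p)) :
    pd4 2 (fun q => G (bpt q)) p = 0 := by
  rw [pd4_comp hG, bpt_single2]; simp
lemma pd4_comp3 {G : Pt2 → ℝ} {p : Pt4} (hG : DifferentiableAt ℝ G (bpt p)) :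
    pd4 3 (fun q => G (bpt q)) p = 0 := by
  rw [pd4_comp hG, bpt_single3]; simp

lemma pd4_model {G0 G1 S : Pt2 → ℝ} {p : Pt4} (h0 : DifferentiableAt ℝ G0 (bpt p))
    (h1 : DifferentiableAt ℝ G1 (bpt p)) (hS : DifferentiableAt ℝ S (bpt p)) (L M : ℝ)
    (u v a : Fin 4) :
    pd4 a (fun q => -(G0 (bpt q) * q 2 + G1 (bpt q) * q 3) + L * q u * q v + M * S (bpt q)) p
      = -(pd4 a (fun q => G0 (bpt q)) p * p 2 + G0 (bpt p) * (Pi.single a 1 : Pt4) 2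
          + pd4 a (fun q => G1 (bpt q)) p * p 3 + G1 (bpt p) * (Pi.single a 1 : Pt4) 3)
        + L * ((Pi.single a 1 : Pt4) u * p v + p u * (Pi.single a 1 : Pt4) v)
        + M * pd4 a (fun q => S (bpt q)) p := by
  have hb : DifferentiableAt ℝ bpt p := bpt_contDiff.differentiable (by simp) p
  have d0 : DifferentiableAt ℝ (fun q => G0 (bpt q)) p := h0.comp p hb
  have d1 : DifferentiableAt ℝ (fun q => G1 (bpt q)) p := h1.comp p hb
  have dS : DifferentiableAt ℝ (fun q => S (bpt q)) p := hS.comp p hb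
  have dc : ∀ u : Fin 4, DifferentiableAt ℝ (fun q : Pt4 => q u) p := fun u => by fun_prop
  rw [pd4_add (((d0.fun_mul (dc 2)).fun_add (d1.fun_mul (dc 3))).fun_neg.fun_add (((dc u).const_mul L).fun_mul (dc v)))
      (dS.const_mul M),
    pd4_add (((d0.fun_mul (dc 2)).fun_add (d1.fun_mul (dc 3))).fun_neg) (((dc u).const_mul L).fun_mul (dc v)),
    pd4_neg, pd4_add (d0.fun_mul (dc 2)) (d1.fun_mul (dc 3)), pd4_mul d0 (dc 2), pd4_mul d1 (dc 3),
    pd4_mul ((dc u).const_mul L) (dc v), pd4_const_mul (dc u), pd4_const_mul dS]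
  simp only [pd4_coord]
  ring

/-- A function with vanishing fibre derivatives is constant along the fibres. -/
lemma fib_const {U : Set Pt2} (hU : IsOpen U) {f : Pt4 → ℝ}
    (hf : ContDiffOn ℝ (⊤ : ℕ∞) f (dom4 U)) (h2 : ∀ p ∈ dom4 U, pd4 2 f p = 0)
    (h3 : ∀ p ∈ dom4 U, pd4 3 f p = 0) {p : Pt4} (hp : p ∈ dom4 U) :
    f p = f (emb2 (bpt p)) := by
  let w : Pt4 := Pi.single 2 (p 2) + Pi.single 3 (p 3)
  have hw : w = p 2 • (Pi.single 2 1 : Pt4) + p 3 • (Pi.single 3 1 : Pt4) := by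
    ext i; fin_cases i <;> simp [w]
  have hpt : p = emb2 (bpt p) + (1 : ℝ) • w := by
    ext i; fin_cases i <;> simp [w, emb2, bpt]
  have hmem : ∀ t : ℝ, emb2 (bpt p) + t • w ∈ dom4 U := by
    intro t
    have : bpt (emb2 (bpt p) + t • w) = bpt p := by
      ext i; fin_cases i <;> simp [w, emb2, bpt]
    simpa [dom4, this] using hp
  have hder : ∀ t : ℝ, HasDerivAt (fun t : ℝ => f (emb2 (bpt p) + t • w)) 0 t := by
    intro t
    have hd := (diffAt (dom4_open hU) hf (hmem t)).hasFDerivAt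
    have hl : HasDerivAt (fun t : ℝ => emb2 (bpt p) + t • w) w t := by
      simpa using ((hasDerivAt_id t).smul_const w).const_add (emb2 (bpt p))
    have := hd.comp_hasDerivAt t hl
    have e2 := h2 _ (hmem t)
    have e3 := h3 _ (hmem t)
    unfold pd4 at e2 e3
    have hz : fderiv ℝ f (emb2 (bpt p) + t • w) w = 0 := by
      have hL : ∀ T : Pt4 →L[ℝ] ℝ, T w
          = p 2 * T (Pi.single 2 1) + p 3 * T (Pi.single 3 1) := by
        intro T
        rw [hw]
        simp only [map_add, map_smul, smul_eq_mul]
      rw [hL, e2, e3]; simp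
    rw [hz] at this
    exact this
  have hc := is_const_of_deriv_eq_zero (fun t => (hder t).differentiableAt)
    (fun t => (hder t).deriv) 1 0
  simp only [zero_smul, add_zero] at hc
  rw [← hpt] at hc
  exact hc

/-- Symmetrised Schouten tensor. -/
def symS (Γ : Conn) (i j : Fin 2) (x : Pt2) : ℝ := (schouten Γ i j x + schouten Γ j i x) / 2

lemma symS_contDiffOn {U : Set Pt2} (hU : IsOpen U) {Γ : Conn}
    (hΓ : ∀ k i j, ContDiffOn ℝ (⊤ : ℕ∞) (Γ k i j) U) (i j : Fin 2) :
    ContDiffOn ℝ (⊤ : ℕ∞) (symS Γ i j) U := by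
  have hp : ∀ a k i j, ContDiffOn ℝ (⊤ : ℕ∞) (pd2 a (Γ k i j)) U :=
    fun a k i j => pd2_contDiffOn hU (hΓ k i j) a
  have hc : ∀ i j k l, ContDiffOn ℝ (⊤ : ℕ∞) (curv Γ i j k l) U := by
    intro i j k l
    unfold curv
    refine ((hp _ _ _ _).sub (hp _ _ _ _)).add (ContDiffOn.sum fun m _ => ?_)
    exact ((hΓ _ _ _).mul (hΓ _ _ _)).sub ((hΓ _ _ _).mul (hΓ _ _ _))
  have hr : ∀ i j, ContDiffOn ℝ (⊤ : ℕ∞) (ricciT Γ i j) U := by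
    intro i j
    unfold ricciT
    exact ContDiffOn.sum fun m _ => hc _ _ _ _
  have hs : ∀ i j, ContDiffOn ℝ (⊤ : ℕ∞) (schouten Γ i j) U := by
    intro i j
    unfold schouten
    exact (((hr _ _).add (hr _ _)).div_const _).add (((hr _ _).sub (hr _ _)).div_const _)
  unfold symS
  exact ((hs _ _).add (hs _ _)).div_const _

/-- The fibre index of a base index. -/
def fi (i : Fin 2) : Fin 4 := ![2, 3] i
/-- The base index in `Fin 4`. -/
def bi (i : Fin 2) : Fin 4 := ![0, 1] i

/-- The `xx`-block of the metric. -/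
def blk (Γ : Conn) (Λ : ℝ) (i j : Fin 2) (q : Pt4) : ℝ :=
  -(Γ 0 i j (bpt q) * q 2 + Γ 1 i j (bpt q) * q 3) + Λ * q (fi i) * q (fi j)
    + Λ⁻¹ * symS Γ i j (bpt q)

lemma lift_eq (Γ : Conn) (Λ : ℝ) (p : Pt4) : einsteinLift Γ Λ p =
    !![blk Γ Λ 0 0 p, blk Γ Λ 0 1 p, 1/2, 0;
     blk Γ Λ 1 0 p, blk Γ Λ 1 1 p, 0, 1/2;
     1/2, 0, 0, 0;
     0, 1/2, 0, 0] := by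
  simp [einsteinLift, blk, fi, fib, symS]

lemma blk_contDiffOn {U : Set Pt2} (hU : IsOpen U) {Γ : Conn}
    (hΓ : ∀ k i j, ContDiffOn ℝ (⊤ : ℕ∞) (Γ k i j) U) (Λ : ℝ) (i j : Fin 2) :
    ContDiffOn ℝ (⊤ : ℕ∞) (blk Γ Λ i j) (dom4 U) := by
  have hb : ∀ {G : Pt2 → ℝ}, ContDiffOn ℝ (⊤ : ℕ∞) G U →
      ContDiffOn ℝ (⊤ : ℕ∞) (fun q => G (bpt q)) (dom4 U) := fun {G} hG =>
    hG.comp bpt_contDiff.contDiffOn (fun _ h => h)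
  have hc : ∀ u : Fin 4, ContDiffOn ℝ (⊤ : ℕ∞) (fun q : Pt4 => q u) (dom4 U) :=
    fun u => (contDiff_apply ℝ ℝ u).contDiffOn
  unfold blk
  exact ((((hb (hΓ 0 i j)).mul (hc 2)).add ((hb (hΓ 1 i j)).mul (hc 3))).neg.add
    ((contDiffOn_const.mul (hc _)).mul (hc _))).add
    (contDiffOn_const.mul (hb (symS_contDiffOn hU hΓ i j)))

lemma pd4_blk {U : Set Pt2} (hU : IsOpen U) {Γ : Conn}
    (hΓ : ∀ k i j, ContDiffOn ℝ (⊤ : ℕ∞) (Γ k i j) U) (Λ : ℝ) (i j : Fin 2) (a : Fin 4)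
    {p : Pt4} (hp : p ∈ dom4 U) :
    pd4 a (blk Γ Λ i j) p
      = -(pd4 a (fun q => Γ 0 i j (bpt q)) p * p 2 + Γ 0 i j (bpt p) * (Pi.single a 1 : Pt4) 2
          + pd4 a (fun q => Γ 1 i j (bpt q)) p * p 3
          + Γ 1 i j (bpt p) * (Pi.single a 1 : Pt4) 3)
        + Λ * ((Pi.single a 1 : Pt4) (fi i) * p (fi j) + p (fi i) * (Pi.single a 1 : Pt4) (fi j))
        + Λ⁻¹ * pd4 a (fun q => symS Γ i j (bpt q)) p :=
  pd4_model (diffAt hU (hΓ 0 i j) hp) (diffAt hU (hΓ 1 i j) hp)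
    (diffAt hU (symS_contDiffOn hU hΓ i j) hp) Λ Λ⁻¹ (fi i) (fi j) a

/-- Every Killing field of the Einstein lift metric is the lift of a projective
vector field of the underlying projective structure. -/
theorem killing_is_projLift
    (U : Set Pt2) (hUopen : IsOpen U) (hUconn : IsConnected U)
    (Γ : Conn) (hΓsmooth : ∀ k i j, ContDiffOn ℝ (⊤ : ℕ∞) (Γ k i j) U)
    (hΓsym : ∀ k i j, ∀ x ∈ U, Γ k i j x = Γ k j i x)
    (Λ : ℝ) (hΛ : Λ ≠ 0)
    (𝒦 : Fin 4 → Pt4 → ℝ)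
    (h𝒦smooth : ∀ a, ContDiffOn ℝ (⊤ : ℕ∞) (𝒦 a) {p : Pt4 | bpt p ∈ U})
    (h𝒦killing : ∀ p : Pt4, bpt p ∈ U →
      ∀ a b, lieT 𝒦 (einsteinLift Γ Λ) a b p = 0) :
    ∃ (K : Fin 2 → Pt2 → ℝ) (ρ : Fin 2 → Pt2 → ℝ),
      (∀ i, ContDiffOn ℝ (⊤ : ℕ∞) (K i) U) ∧ (∀ i, ContDiffOn ℝ (⊤ : ℕ∞) (ρ i) U) ∧
      (∀ k i j, ∀ x ∈ U, lieConn Γ K k i j x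
        = (if k = i then ρ j x else 0) + (if k = j then ρ i x else 0)) ∧
      (∀ p : Pt4, bpt p ∈ U →
        𝒦 0 p = K 0 (bpt p) ∧ 𝒦 1 p = K 1 (bpt p) ∧
        𝒦 2 p = -(∑ j, fib p j * pd2 0 (K j) (bpt p)) + Λ⁻¹ * ρ 0 (bpt p) ∧
        𝒦 3 p = -(∑ j, fib p j * pd2 1 (K j) (bpt p)) + Λ⁻¹ * ρ 1 (bpt p)) := by
  have hV : IsOpen (dom4 U) := dom4_open hUopen
  have hX : ∀ a, ContDiffOn ℝ (⊤ : ℕ∞) (𝒦 a) (dom4 U) := h𝒦smooth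
  have hk : ∀ p ∈ dom4 U, ∀ a b, lieT 𝒦 (einsteinLift Γ Λ) a b p = 0 := h𝒦killing
  have hconst : ∀ (a : Fin 4) (r : ℝ) (p : Pt4), pd4 a (fun _ => r) p = 0 := by
    intro a r p; simp [pd4]
  have k22 : ∀ p ∈ dom4 U, pd4 2 (𝒦 0) p = 0 := by
    intro p hp
    have := hk p hp 2 2
    simp [lieT, lift_eq, Fin.sum_univ_four, hconst] at this
    linarith
  have k33 : ∀ p ∈ dom4 U, pd4 3 (𝒦 1) p = 0 := by
    intro p hp
    have := hk p hp 3 3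
    simp [lieT, lift_eq, Fin.sum_univ_four, hconst] at this
    linarith
  have k23 : ∀ p ∈ dom4 U, pd4 2 (𝒦 1) p = - pd4 3 (𝒦 0) p := by
    intro p hp
    have := hk p hp 2 3
    simp [lieT, lift_eq, Fin.sum_univ_four, hconst] at this
    linarith
  have kx : ∀ j, ∀ p ∈ dom4 U, pd4 2 (𝒦 (fi j)) p
      = -pd4 (bi j) (𝒦 0) p + 2 * (blk Γ Λ 1 j p * pd4 3 (𝒦 0) p) := by
    intro j p hp
    have := hk p hp 2 (bi j)
    have h1 := k22 p hp
    have h2 := k23 p hp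
    fin_cases j <;> simp [bi, fi, lieT, lift_eq, Fin.sum_univ_four, hconst] at this ⊢ <;>
    · rw [h1, h2] at this
      linarith
  have ky : ∀ j, ∀ p ∈ dom4 U, pd4 3 (𝒦 (fi j)) p
      = -pd4 (bi j) (𝒦 1) p + -(2 * (blk Γ Λ 0 j p * pd4 3 (𝒦 0) p)) := by
    intro j p hp
    have := hk p hp 3 (bi j)
    have h1 := k33 p hp
    fin_cases j <;> simp [bi, fi, lieT, lift_eq, Fin.sum_univ_four, hconst] at this ⊢ <;>
    · rw [h1] at this
      linarith
  -- the rotation coefficient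
  have hcs : ContDiffOn ℝ (⊤ : ℕ∞) (pd4 3 (𝒦 0)) (dom4 U) := pd4_contDiffOn hV (hX 0) 3
  have c2 : ∀ p ∈ dom4 U, pd4 2 (pd4 3 (𝒦 0)) p = 0 := by
    intro p hp
    rw [pd4_comm hV (hX 0) 2 3 hp, pd4_congr hV k22 3 hp, pd4_zero]
  have c3 : ∀ p ∈ dom4 U, pd4 3 (pd4 3 (𝒦 0)) p = 0 := by
    intro p hp
    have h := pd4_congr hV k23 3 hp
    rw [pd4_neg, pd4_comm hV (hX 1) 3 2 hp, pd4_congr hV k33 2 hp, pd4_zero] at h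
    linarith
  have hΓd : ∀ k i j, ∀ p ∈ dom4 U, DifferentiableAt ℝ (Γ k i j) (bpt p) :=
    fun k i j p hp => diffAt hUopen (hΓsmooth k i j) hp
  have hSd : ∀ i j, ∀ p ∈ dom4 U, DifferentiableAt ℝ (symS Γ i j) (bpt p) :=
    fun i j p hp => diffAt hUopen (symS_contDiffOn hUopen hΓsmooth i j) hp
  have cint : ∀ p ∈ dom4 U, pd4 0 (pd4 3 (𝒦 0)) p = pd4 3 (𝒦 0) p *
      (-((-3 * Λ) * p 2 + 0 * p 3) + 0 * p 2 * p 2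
        + (-1) * (Γ 1 1 0 (bpt p) + Γ 0 0 0 (bpt p))) := by
    intro p hp
    have e1 := pd4_congr hV (kx 0) 3 hp
    have e2 := pd4_congr hV (ky 0) 2 hp
    have dc := diffAt hV hcs hp
    have d1 := diffAt hV (blk_contDiffOn hUopen hΓsmooth Λ 1 0) hp
    have d0 := diffAt hV (blk_contDiffOn hUopen hΓsmooth Λ 0 0) hp
    have dk0 := diffAt hV (pd4_contDiffOn hV (hX 0) 0) hp
    have dk1 := diffAt hV (pd4_contDiffOn hV (hX 1) 0) hp
    simp only [show bi 0 = 0 from rfl, show fi 0 = 2 from rfl] at e1 e2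
    change pd4 3 (pd4 2 (𝒦 2)) p = _ at e1
    change pd4 2 (pd4 3 (𝒦 2)) p = _ at e2
    rw [pd4_add dk0.fun_neg ((d1.fun_mul dc).const_mul 2), pd4_neg,
      pd4_const_mul (d1.fun_mul dc), pd4_mul d1 dc, c3 p hp,
      pd4_blk hUopen hΓsmooth Λ 1 0 3 hp, pd4_comm hV (hX 2) 3 2 hp,
      pd4_comp3 (hΓd _ _ _ p hp), pd4_comp3 (hΓd _ _ _ p hp), pd4_comp3 (hSd _ _ p hp)] at e1
    rw [pd4_add dk1.fun_neg ((d0.fun_mul dc).const_mul 2).fun_neg, pd4_neg, pd4_neg,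
      pd4_const_mul (d0.fun_mul dc), pd4_mul d0 dc, c2 p hp,
      pd4_blk hUopen hΓsmooth Λ 0 0 2 hp,
      pd4_comp2 (hΓd _ _ _ p hp), pd4_comp2 (hΓd _ _ _ p hp), pd4_comp2 (hSd _ _ p hp)] at e2
    have f1 : pd4 3 (fun q => pd4 0 (𝒦 0) q) p = pd4 0 (pd4 3 (𝒦 0)) p :=
      pd4_comm hV (hX 0) 3 0 hp
    have f2 : pd4 2 (fun q => pd4 0 (𝒦 1) q) p = -pd4 0 (pd4 3 (𝒦 0)) p := by
      rw [← pd4_neg, ← pd4_congr hV k23 0 hp]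
      exact pd4_comm hV (hX 1) 2 0 hp
    rw [f1] at e1
    rw [f2] at e2
    simp [fi] at e1 e2
    linarith
  have c0 : ∀ p ∈ dom4 U, pd4 3 (𝒦 0) p = 0 := by
    intro p hp
    have e := pd4_congr hV cint 2 hp
    have dS : DifferentiableAt ℝ (fun x => Γ 1 1 0 x + Γ 0 0 0 x) (bpt p) :=
      (hΓd 1 1 0 p hp).fun_add (hΓd 0 0 0 p hp)
    have dc := diffAt hV hcs hp
    have m := pd4_model (G0 := fun _ => -3 * Λ) (G1 := fun _ => 0)
      (S := fun x => Γ 1 1 0 x + Γ 0 0 0 x) (p := p) (by fun_prop) (by fun_prop) dS 0 (-1) 2 2 2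
    have hb : DifferentiableAt ℝ bpt p := bpt_contDiff.differentiable (by simp) p
    have g1 : DifferentiableAt ℝ (fun q => Γ 1 1 0 (bpt q)) p := (hΓd 1 1 0 p hp).comp p hb
    have g0 : DifferentiableAt ℝ (fun q => Γ 0 0 0 (bpt q)) p := (hΓd 0 0 0 p hp).comp p hb
    rw [pd4_mul dc (by fun_prop), m, c2 p hp, pd4_comp2 dS] at e
    have f1 : pd4 2 (fun q => pd4 0 (pd4 3 (𝒦 0)) q) p = 0 := by
      rw [← pd4_zero 0 p, ← pd4_congr hV c2 0 hp]
      exact pd4_comm hV hcs 2 0 hp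
    rw [f1] at e
    simp [hconst] at e
    rcases e with e | e
    · exact e
    · exact absurd e hΛ
  have hz2 : ∀ j : Fin 2, ∀ p ∈ dom4 U, pd4 2 (𝒦 (bi j)) p = 0 := by
    intro j p hp
    fin_cases j
    · exact k22 p hp
    · have := k23 p hp
      rw [c0 p hp, neg_zero] at this
      exact this
  have hz3 : ∀ j : Fin 2, ∀ p ∈ dom4 U, pd4 3 (𝒦 (bi j)) p = 0 := by
    intro j p hp
    fin_cases j
    · exact c0 p hp
    · exact k33 p hp
  let K : Fin 2 → Pt2 → ℝ := fun i x => 𝒦 (bi i) (emb2 x)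
  let σ : Fin 2 → Pt2 → ℝ := fun i x => 𝒦 (fi i) (emb2 x)
  have hmaps : ∀ x ∈ U, emb2 x ∈ dom4 U := fun x hx => by
    change bpt (emb2 x) ∈ U
    rwa [bpt_emb2]
  have hKs : ∀ i, ContDiffOn ℝ (⊤ : ℕ∞) (K i) U := fun i =>
    (hX (bi i)).comp emb2_contDiff.contDiffOn hmaps
  have hσs : ∀ i, ContDiffOn ℝ (⊤ : ℕ∞) (σ i) U := fun i =>
    (hX (fi i)).comp emb2_contDiff.contDiffOn hmaps
  have hKeq : ∀ i, ∀ p ∈ dom4 U, 𝒦 (bi i) p = K i (bpt p) := fun i p hp =>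
    fib_const hUopen (hX (bi i)) (hz2 i) (hz3 i) hp
  have hKd : ∀ i, ∀ p ∈ dom4 U, DifferentiableAt ℝ (K i) (bpt p) := fun i p hp =>
    diffAt hUopen (hKs i) hp
  have hKp : ∀ i j, ∀ p ∈ dom4 U, pd4 (bi j) (𝒦 (bi i)) p = pd2 j (K i) (bpt p) := by
    intro i j p hp
    rw [pd4_congr hV (hKeq i) _ hp]
    fin_cases j
    · exact pd4_comp0 (hKd i p hp)
    · exact pd4_comp1 (hKd i p hp)
  have hKpd : ∀ i j, ∀ p ∈ dom4 U, DifferentiableAt ℝ (pd2 j (K i)) (bpt p) := fun i j p hp =>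
    diffAt hUopen (pd2_contDiffOn hUopen (hKs i) j) hp
  have hσd : ∀ i, ∀ p ∈ dom4 U, DifferentiableAt ℝ (σ i) (bpt p) := fun i p hp =>
    diffAt hUopen (hσs i) hp
  -- the fibre components
  have hYeq : ∀ j, ∀ p ∈ dom4 U, 𝒦 (fi j) p =
      -(pd2 j (K 0) (bpt p) * p 2 + pd2 j (K 1) (bpt p) * p 3) + 0 * p 0 * p 0
        + 1 * σ j (bpt p) := by
    intro j p hp
    have hb : ∀ {G : Pt2 → ℝ}, ContDiffOn ℝ (⊤ : ℕ∞) G U →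
        ContDiffOn ℝ (⊤ : ℕ∞) (fun q => G (bpt q)) (dom4 U) := fun {G} hG =>
      hG.comp bpt_contDiff.contDiffOn (fun _ h => h)
    have hc : ∀ u : Fin 4, ContDiffOn ℝ (⊤ : ℕ∞) (fun q : Pt4 => q u) (dom4 U) :=
      fun u => (contDiff_apply ℝ ℝ u).contDiffOn
    let M : Pt4 → ℝ := fun q => -(pd2 j (K 0) (bpt q) * q 2 + pd2 j (K 1) (bpt q) * q 3)
      + 0 * q 0 * q 0 + 1 * σ j (bpt q)
    have hM : ContDiffOn ℝ (⊤ : ℕ∞) M (dom4 U) :=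
      ((((hb (pd2_contDiffOn hUopen (hKs 0) j)).mul (hc 2)).add
        ((hb (pd2_contDiffOn hUopen (hKs 1) j)).mul (hc 3))).neg.add
        ((contDiffOn_const.mul (hc _)).mul (hc _))).add (contDiffOn_const.mul (hb (hσs j)))
    have hMd : ∀ a, ∀ p ∈ dom4 U, pd4 a M p = _ := fun a p hp =>
      pd4_model (hKpd 0 j p hp) (hKpd 1 j p hp) (hσd j p hp) 0 1 0 0 a
    have key := fib_const hUopen (f := fun q => 𝒦 (fi j) q + -M q) ((hX (fi j)).add hM.neg)
      (by
        intro p hp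
        rw [pd4_add (diffAt hV (hX _) hp) (diffAt hV hM hp).fun_neg, pd4_neg, hMd 2 p hp,
          pd4_comp2 (hKpd 0 j p hp), pd4_comp2 (hKpd 1 j p hp), pd4_comp2 (hσd j p hp)]
        have := kx j p hp
        rw [c0 p hp, show (0 : Fin 4) = bi 0 from rfl, hKp 0 j p hp] at this
        change pd4 2 (𝒦 (fi j)) p + _ = _
        rw [this]
        simp)
      (by
        intro p hp
        rw [pd4_add (diffAt hV (hX _) hp) (diffAt hV hM hp).fun_neg, pd4_neg, hMd 3 p hp,
          pd4_comp3 (hKpd 0 j p hp), pd4_comp3 (hKpd 1 j p hp), pd4_comp3 (hσd j p hp)]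
        have := ky j p hp
        rw [c0 p hp, show (1 : Fin 4) = bi 1 from rfl, hKp 1 j p hp] at this
        change pd4 3 (𝒦 (fi j)) p + _ = _
        rw [this]
        simp) hp
    have h0 : M (emb2 (bpt p)) = 𝒦 (fi j) (emb2 (bpt p)) := by
      simp only [M, bpt_emb2]
      simp [emb2, σ]
    rw [h0] at key
    change _ = M p
    linarith
  refine ⟨K, fun i x => Λ * σ i x, hKs, fun i => contDiffOn_const.mul (hσs i), ?_, ?_⟩
  · have hYp : ∀ j i, ∀ p ∈ dom4 U, pd4 (bi i) (𝒦 (fi j)) p =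
        -(pd2 i (pd2 j (K 0)) (bpt p) * p 2 + pd2 i (pd2 j (K 1)) (bpt p) * p 3)
          + pd2 i (σ j) (bpt p) := by
      intro j i p hp
      rw [pd4_congr hV (hYeq j) _ hp,
        pd4_model (hKpd 0 j p hp) (hKpd 1 j p hp) (hσd j p hp) 0 1 0 0 (bi i)]
      fin_cases i
      · have e1 := pd4_comp0 (hKpd 0 j p hp)
        have e2 := pd4_comp0 (hKpd 1 j p hp)
        have e3 := pd4_comp0 (hσd j p hp)
        simp [bi, e1, e2, e3]
      · have e1 := pd4_comp1 (hKpd 0 j p hp)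
        have e2 := pd4_comp1 (hKpd 1 j p hp)
        have e3 := pd4_comp1 (hσd j p hp)
        simp [bi, e1, e2, e3]
    have main : ∀ i j, ∀ p ∈ dom4 U,
        𝒦 (bi 0) p * pd4 0 (blk Γ Λ i j) p + 𝒦 (bi 1) p * pd4 1 (blk Γ Λ i j) p
        + 𝒦 (fi 0) p * pd4 2 (blk Γ Λ i j) p + 𝒦 (fi 1) p * pd4 3 (blk Γ Λ i j) p
        + blk Γ Λ 0 j p * pd4 (bi i) (𝒦 (bi 0)) p + blk Γ Λ 1 j p * pd4 (bi i) (𝒦 (bi 1)) p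
        + blk Γ Λ i 0 p * pd4 (bi j) (𝒦 (bi 0)) p + blk Γ Λ i 1 p * pd4 (bi j) (𝒦 (bi 1)) p
        + (1 / 2) * pd4 (bi i) (𝒦 (fi j)) p + (1 / 2) * pd4 (bi j) (𝒦 (fi i)) p = 0 := by
      intro i j p hp
      have := hk p hp (bi i) (bi j)
      fin_cases i <;> fin_cases j <;>
        simp [bi, fi, lieT, lift_eq, Fin.sum_univ_four] at this ⊢ <;> linarith
    intro k i j x hx
    have hpm : ∀ s t : ℝ, (![x 0, x 1, s, t] : Pt4) ∈ dom4 U ∧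
        bpt (![x 0, x 1, s, t] : Pt4) = x := by
      intro s t
      have : bpt (![x 0, x 1, s, t] : Pt4) = x := by
        ext i; fin_cases i <;> rfl
      refine ⟨?_, this⟩
      change bpt (![x 0, x 1, s, t] : Pt4) ∈ U
      rwa [this]
    have hs0 := hΓsym 0 1 0 x hx
    have hs1 := hΓsym 1 1 0 x hx
    have hc0 := pd2_comm hUopen (hKs 0) 1 0 hx
    have hc1 := pd2_comm hUopen (hKs 1) 1 0 hx
    have E' : ∀ s t : ℝ,
        (lieConn Γ K 0 i j x - ((if 0 = i then Λ * σ j x else 0)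
          + (if 0 = j then Λ * σ i x else 0))) * s
        + (lieConn Γ K 1 i j x - ((if 1 = i then Λ * σ j x else 0)
          + (if 1 = j then Λ * σ i x else 0))) * t
        = Λ⁻¹ * (K 0 x * pd2 0 (symS Γ i j) x + K 1 x * pd2 1 (symS Γ i j) x)
          - σ 0 x * Γ 0 i j x - σ 1 x * Γ 1 i j x
          + Λ⁻¹ * (symS Γ 0 j x * pd2 i (K 0) x + symS Γ 1 j x * pd2 i (K 1) x
            + symS Γ i 0 x * pd2 j (K 0) x + symS Γ i 1 x * pd2 j (K 1) x)
          + (1 / 2) * (pd2 i (σ j) x + pd2 j (σ i) x) := by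
      intro s t
      have e := main i j ![x 0, x 1, s, t] (hpm s t).1
      have hp := (hpm s t).1
      have hx' := (hpm s t).2
      simp only [hKp _ _ _ hp, hYp _ _ _ hp, hKeq _ _ hp, hYeq _ _ hp,
        pd4_blk hUopen hΓsmooth Λ i j _ hp, pd4_comp0 (hΓd _ _ _ _ hp),
        pd4_comp1 (hΓd _ _ _ _ hp), pd4_comp2 (hΓd _ _ _ _ hp), pd4_comp3 (hΓd _ _ _ _ hp),
        pd4_comp0 (hSd _ _ _ hp), pd4_comp1 (hSd _ _ _ hp), pd4_comp2 (hSd _ _ _ hp),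
        pd4_comp3 (hSd _ _ _ hp), blk, hx'] at e
      have hl : ∀ k, lieConn Γ K k i j x = pd2 i (pd2 j (K k)) x
          + ∑ m, (K m x * pd2 m (Γ k i j) x - Γ m i j x * pd2 m (K k) x
        + Γ k i m x * pd2 j (K m) x + Γ k j m x * pd2 i (K m) x) := fun k => rfl
      rw [hl, hl]
      fin_cases i <;> fin_cases j <;> simp [fi] at e ⊢ <;>
        simp only [hs0, hs1, hc0, hc1] at e ⊢ <;> linear_combination -e
    have e00 := E' 0 0
    have e10 := E' 1 0
    have e01 := E' 0 1
    fin_cases k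
    · change lieConn Γ K 0 i j x = (if 0 = i then Λ * σ j x else 0)
          + (if 0 = j then Λ * σ i x else 0)
      linear_combination e10 - e00
    · change lieConn Γ K 1 i j x = (if 1 = i then Λ * σ j x else 0)
          + (if 1 = j then Λ * σ i x else 0)
      linear_combination e01 - e00
  · intro p hp
    refine ⟨hKeq 0 p hp, hKeq 1 p hp, ?_, ?_⟩
    · have := hYeq 0 p hp
      change 𝒦 2 p = _ at this
      rw [this]
      simp [fib]
      field_simp
    · have := hYeq 1 p hp
      change 𝒦 3 p = _ at this
      rw [this]
      simp [fib]
      field_simp
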